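/- For two parallel copies of the CHSH game, there exists a deterministic local strategy (functions α, β : {0,1}² → {0,1}²) whose winning probability equals 10/16, which is strictly greater than (3/4)² = 9/16. -/

import Mathlib

/-!
Let each player bet that Alice's first input agrees with Bob's second: Alice answers `(0, x₁ x₂)`
and Bob answers `(y₁ y₂, 0)`. The two winning conditions become `y₁ y₂ = x₁ y₁` and
`x₁ x₂ = x₂ y₂`. Both hold if `x₁ = y₂`; otherwise, by cancellation, they say `y₁ = 0` and `x₂ = 0`.
The failures of the two copies are thus correlated, and over an alphabet of size `q` the players
win on `q³ + q (q - 1)` of the `q⁴` input pairs.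
-/

open Finset

theorem card_filter_fst_eq_snd_or_eq {X Y : Type*} [Fintype X] [DecidableEq X] [Fintype Y]
    [DecidableEq Y] (y : Y) :
    #{p : (X × X) × Y | p.1.1 = p.1.2 ∨ p.2 = y} =
      Fintype.card X * Fintype.card Y + Fintype.card X * (Fintype.card X - 1) := by
  have eq_union : ({p | p.1.1 = p.1.2 ∨ p.2 = y} : Finset ((X × X) × Y)) =
      univ.diag ×ˢ univ ∪ univ.offDiag ×ˢ {y} := by
    ext p
    simp only [mem_filter_univ, mem_union, mem_product, mem_diag, mem_offDiag, mem_univ,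
      mem_singleton, true_and, and_true]
    tauto
  have disjoint_parts : Disjoint ((univ : Finset X).diag ×ˢ (univ : Finset Y))
      (univ.offDiag ×ˢ {y}) :=
    disjoint_product.2 (.inl (disjoint_diag_offDiag _))
  rw [eq_union, card_union_of_disjoint disjoint_parts, card_product, card_product, diag_card,
    offDiag_card, card_singleton, card_univ, card_univ, mul_one, Nat.mul_sub_one]

namespace ParallelCHSH

variable {R : Type*}

/-- The input pairs `(x, y)` on which the deterministic strategy `(α, β)` wins both copies of the
CHSH game. Inputs and outputs range over a finite alphabet `R`, and the winning condition
`a ⊕ b = x ∧ y` of a single copy is read as `a + b = x * y`, which is the usual game for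
`R = ZMod 2`. -/
def winningInputs [Add R] [Mul R] [Fintype R] [DecidableEq R] (α β : R × R → R × R) :
    Finset ((R × R) × (R × R)) :=
  {p | (α p.1).1 + (β p.2).1 = p.1.1 * p.2.1 ∧ (α p.1).2 + (β p.2).2 = p.1.2 * p.2.2}

/-- Alice's half of the crossed strategy: she answers the second copy as if Bob's second input
were her own first input. -/
def crossedAlice [Zero R] [Mul R] (x : R × R) : R × R := (0, x.1 * x.2)

/-- Bob's half of the crossed strategy: he answers the first copy as if Alice's first input were
his own second input. -/
def crossedBob [Zero R] [Mul R] (y : R × R) : R × R := (y.1 * y.2, 0)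

section Crossed

variable [CommSemiring R] [IsCancelMulZero R] [Fintype R] [DecidableEq R]

theorem mem_winningInputs_crossed {x y : R × R} :
    (x, y) ∈ winningInputs crossedAlice crossedBob ↔ x.1 = y.2 ∨ x.2 = 0 ∧ y.1 = 0 := by
  have first_copy : y.1 * y.2 = x.1 * y.1 ↔ x.1 = y.2 ∨ y.1 = 0 := by
    rw [mul_comm x.1, mul_eq_mul_left_iff, eq_comm]
  have second_copy : x.1 * x.2 = x.2 * y.2 ↔ x.1 = y.2 ∨ x.2 = 0 := by
    rw [mul_comm x.1, mul_eq_mul_left_iff]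
  simp only [winningInputs, crossedAlice, crossedBob, mem_filter_univ, zero_add, add_zero,
    first_copy, second_copy]
  tauto

theorem card_winningInputs_crossed :
    #(winningInputs (R := R) crossedAlice crossedBob) =
      Fintype.card R ^ 3 + Fintype.card R * (Fintype.card R - 1) := by
  -- Regroup `((x₁, x₂), (y₁, y₂))` as `((x₁, y₂), (x₂, y₁))`.
  let regroup : (R × R) × (R × R) ≃ (R × R) × (R × R) :=
    ((Equiv.refl _).prodCongr (Equiv.prodComm R R)).trans (Equiv.prodProdProdComm R R R R)
  calc #(winningInputs (R := R) crossedAlice crossedBob)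
      = #{p : (R × R) × (R × R) | p.1.1 = p.1.2 ∨ p.2 = (0, 0)} :=
        card_equiv regroup fun ⟨x, y⟩ => by simp [mem_winningInputs_crossed, regroup]
    _ = Fintype.card R ^ 3 + Fintype.card R * (Fintype.card R - 1) := by
        rw [card_filter_fst_eq_snd_or_eq, Fintype.card_prod]
        ring

end Crossed

end ParallelCHSH

open ParallelCHSH

theorem parallel_chsh_two_copies_general (R : Type*) [CommSemiring R] [IsCancelMulZero R]
    [Fintype R] [DecidableEq R] :
    ∃ α β : R × R → R × R,
      #(winningInputs α β) = Fintype.card R ^ 3 + Fintype.card R * (Fintype.card R - 1) :=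
  ⟨crossedAlice, crossedBob, card_winningInputs_crossed⟩

/-- For two parallel CHSH games there is a deterministic local strategy
winning with probability 10/16 > (3/4)². -/
theorem parallel_chsh_two_copies :
    ∃ α β : Fin 2 × Fin 2 → Fin 2 × Fin 2,
      ((Finset.univ.filter
        (fun p : (Fin 2 × Fin 2) × (Fin 2 × Fin 2) =>
          (α p.1).1 + (β p.2).1 = p.1.1 * p.2.1 ∧
          (α p.1).2 + (β p.2).2 = p.1.2 * p.2.2)).card : ℝ) / 16 = 10 / 16 ∧
      (10 : ℝ) / 16 > (3 / 4) ^ 2 := by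
  obtain ⟨α, β, card_wins⟩ := parallel_chsh_two_copies_general (ZMod 2)
  refine ⟨α, β, ?_, by norm_num⟩
  change (#(winningInputs α β) : ℝ) / 16 = 10 / 16
  norm_num [card_wins, ZMod.card]
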